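/- For every real number x and every real t with |t| < π/2, the series 1 + Σ_{n≥1} C̄^{(1,0,∅,0)}_{2n}(x) · t^{2n}/(2n)! converges and its sum equals 1 + ∫_0^t x·(sec z)^x·(1 − x + x·sec z)·(∫_0^z (cos y)^x dy) dz, where sec z = 1/cos z. -/

import Mathlib

/-- A permutation `σ` of `{1,…,n}` (as a permutation of `Fin n`) is up-down if
`σ_1 < σ_2 > σ_3 < σ_4 > ⋯`. -/
def UpDown {n : ℕ} (σ : Equiv.Perm (Fin n)) : Prop :=
  ∀ i : Fin n, ∀ h : i.val + 1 < n,
    if Even i.val then σ i < σ ⟨i.val + 1, h⟩ else σ ⟨i.val + 1, h⟩ < σ i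

/-- A permutation is down-up if `σ_1 > σ_2 < σ_3 > σ_4 < ⋯`. -/
def DownUp {n : ℕ} (σ : Equiv.Perm (Fin n)) : Prop :=
  ∀ i : Fin n, ∀ h : i.val + 1 < n,
    if Even i.val then σ ⟨i.val + 1, h⟩ < σ i else σ i < σ ⟨i.val + 1, h⟩

/-- `σ_i` matches `MMP(1,0,∅,0)`: there exists `j > i` with `σ_j > σ_i` and
there is no `j < i` with `σ_j < σ_i`. -/
def Matches1 {n : ℕ} (σ : Equiv.Perm (Fin n)) (i : Fin n) : Prop :=
  (∃ j, i < j ∧ σ i < σ j) ∧ ¬ ∃ j, j < i ∧ σ j < σ i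

/-- `mmp^{(1,0,∅,0)}(σ)`: the number of indices matching `MMP(1,0,∅,0)` in `σ`. -/
noncomputable def mmp1 {n : ℕ} (σ : Equiv.Perm (Fin n)) : ℕ :=
  {i : Fin n | Matches1 σ i}.ncard

open scoped Classical in
/-- `C̄^{(1,0,∅,0)}_{2n+2}(x) = Σ_{σ ∈ DU_{2n+2}} x^{mmp^{(1,0,∅,0)}(σ) + χ(σ_1 = 2n+2)}`,
where `χ(σ_1 = 2n+2)` is 1 if the first entry of `σ` is the largest value `2n+2`
(i.e. `2*n+1` as an element of `Fin (2n+2)`) and 0 otherwise.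
`Cbar n x` is `C̄^{(1,0,∅,0)}_{2m}(x)` for `m = n+1`. -/
noncomputable def Cbar (n : ℕ) (x : ℝ) : ℝ :=
  ∑ σ : Equiv.Perm (Fin (2*n+2)), if DownUp σ
    then x ^ (mmp1 σ + if (σ ⟨0, by omega⟩).val = 2*n+1 then 1 else 0) else 0

/-!
Cutting a down-up permutation of length at least two at its smallest entry leaves two down-up
lists, the first of odd length, and that entry is the last left-to-right minimum. With the
left-to-right minima weighted by `x`, this turns into differential equations for the exponential
generating functions: `T' = 1 + T * T` and `S' = T * S` for odd and even length without weight, so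
`T = tan`, `S = sec`; `O' = x + x * O * T` for odd length, so `O = x * cos ^ (-x) * ∫ cos ^ x`; and
`C' = O * (1 - x + x * S)` for the polynomials `C̄`, because the exponent `mmp + χ` counts the
left-to-right minima except one in the last position. All of these functions are holomorphic on
`|z| < π / 2`, hence given there by their Taylor series.
-/

section Arrangements

open Finset

variable {α : Type*}

/-- The lists that enumerate the finite set `s` without repetition. -/
def arrangements (s : Finset α) : Finset (List α) :=
  ⟨s.val.lists, Multiset.lists_nodup_finset s⟩

theorem mem_arrangements {s : Finset α} {l : List α} :
    l ∈ arrangements s ↔ (l : Multiset α) = s.val := by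
  rw [arrangements, mem_mk, Multiset.mem_lists_iff, Multiset.quot_mk_to_coe, eq_comm]

theorem mem_of_mem_arrangements {s : Finset α} {l : List α} (hl : l ∈ arrangements s) {a : α} :
    a ∈ l ↔ a ∈ s := by
  rw [← mem_val, ← mem_arrangements.1 hl, Multiset.mem_coe]

theorem length_of_mem_arrangements {s : Finset α} {l : List α} (hl : l ∈ arrangements s) :
    l.length = #s := by
  rw [card_def, ← mem_arrangements.1 hl, Multiset.coe_card]

theorem arrangements_empty : arrangements (∅ : Finset α) = {[]} := by
  ext l
  simp [mem_arrangements]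

theorem sum_arrangements_ite_eq_nil {M : Type*} [AddCommMonoid M] [DecidableEq α] (s : Finset α)
    (c : M) : ∑ l ∈ arrangements s, (if l = [] then c else 0) = if s = ∅ then c else 0 := by
  rw [sum_ite_eq']
  simp [mem_arrangements, eq_comm]

theorem ofFn_perm_mem_arrangements {n : ℕ} (σ : Equiv.Perm (Fin n)) :
    List.ofFn σ ∈ arrangements univ := by
  rw [mem_arrangements, ← Fin.univ_val_map, Multiset.map_univ_val_equiv]

theorem sum_ofFn_perm {M : Type*} [AddCommMonoid M] {n : ℕ} (F : List (Fin n) → M) :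
    ∑ σ : Equiv.Perm (Fin n), F (List.ofFn σ) = ∑ l ∈ arrangements univ, F l := by
  refine sum_nbij (fun σ ↦ List.ofFn σ) (fun σ _ ↦ ofFn_perm_mem_arrangements σ) ?_ ?_
    fun _ _ ↦ rfl
  · intro σ _ τ _ h
    exact Equiv.coe_fn_injective (List.ofFn_injective h)
  · intro l hl
    have hlen : l.length = n := by simpa using length_of_mem_arrangements hl
    obtain ⟨f, rfl⟩ : ∃ f : Fin n → Fin n, List.ofFn f = l :=
      ⟨fun i ↦ l[i.1], List.ext_getElem (by simp [hlen]) (by simp)⟩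
    have hnodup : (List.ofFn f).Nodup :=
      Multiset.coe_nodup.1 (mem_arrangements.1 hl ▸ univ.nodup)
    have hbij := Finite.injective_iff_bijective.1 (List.nodup_ofFn.1 hnodup)
    exact ⟨Equiv.ofBijective f hbij, mem_coe.2 (mem_univ _), rfl⟩

variable [DecidableEq α] {m : α} {t : Finset α}

theorem append_cons_mem_arrangements_insert (hm : m ∉ t) {A B : List α} :
    A ++ m :: B ∈ arrangements (insert m t) ↔ (A : Multiset α) + B = t.val := by
  have hsplit : ((A ++ m :: B : List α) : Multiset α) = m ::ₘ ((A : Multiset α) + B) := by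
    simp [← Multiset.cons_coe, ← Multiset.coe_add]
  rw [mem_arrangements, hsplit, insert_val_of_notMem hm, Multiset.cons_inj_right]

theorem sum_arrangements_insert {M : Type*} [AddCommMonoid M] (hm : m ∉ t) (F : List α → M) :
    ∑ l ∈ arrangements (insert m t), F l =
      ∑ u ∈ t.powerset, ∑ A ∈ arrangements u, ∑ B ∈ arrangements (t \ u), F (A ++ m :: B) := by
  simp_rw [← sum_product', Finset.sum_sigma']
  symm
  refine sum_nbij (fun p ↦ p.2.1 ++ m :: p.2.2) ?_ ?_ ?_ fun _ _ ↦ rfl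
  · rintro ⟨u, A, B⟩ h
    simp only [mem_sigma, mem_powerset, mem_product, mem_arrangements] at h
    rw [append_cons_mem_arrangements_insert hm, h.2.1, h.2.2, sdiff_val,
      add_tsub_cancel_of_le (val_le_iff.2 h.1)]
  · rintro ⟨u, A, B⟩ h ⟨u', A', B'⟩ h' heq
    simp only [coe_sigma, Set.mem_sigma_iff, mem_coe, mem_powerset, mem_product] at h h' heq
    have hA : m ∉ A := fun hmem ↦ hm (h.1 ((mem_of_mem_arrangements h.2.1).1 hmem))
    have hB : m ∉ B := fun hmem ↦
      hm (mem_sdiff.1 ((mem_of_mem_arrangements h.2.2).1 hmem)).1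
    obtain ⟨rfl, -, rfl⟩ := (List.append_cons_inj_of_notMem hA hB).1 heq
    obtain rfl : u = u' :=
      val_injective ((mem_arrangements.1 h.2.1).symm.trans (mem_arrangements.1 h'.2.1))
    rfl
  · intro l hl
    obtain ⟨A, B, rfl⟩ := List.append_of_mem
      ((mem_of_mem_arrangements hl).2 (mem_insert_self m t))
    have hAB := (append_cons_mem_arrangements_insert hm).1 hl
    have hle : (A : Multiset α) ≤ t.val := hAB ▸ Multiset.le_add_right _ _
    refine ⟨⟨⟨A, Multiset.nodup_of_le hle t.nodup⟩, A, B⟩, ?_, rfl⟩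
    simp only [coe_sigma, Set.mem_sigma_iff, mem_coe, mem_powerset, mem_product, mem_arrangements,
      sdiff_val, ← hAB, ← val_le_iff, add_tsub_cancel_left]
    exact ⟨Multiset.le_add_right _ _, trivial, trivial⟩

end Arrangements

section DownUpLists

variable {α : Type*} [LinearOrder α]

/-- The list `l = l₀ l₁ l₂ …` is alternating with a descent first: `l₀ > l₁ < l₂ > ⋯`. -/
def IsDownUpList (l : List α) : Prop :=
  ∀ i, ∀ h : i + 1 < l.length, if Even i then l[i + 1] < l[i] else l[i] < l[i + 1]

theorem isDownUpList_nil : IsDownUpList ([] : List α) := by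
  simp [IsDownUpList]

theorem isDownUpList_ofFn_iff {n : ℕ} (σ : Equiv.Perm (Fin n)) :
    IsDownUpList (List.ofFn σ) ↔ DownUp σ := by
  simp only [IsDownUpList, DownUp, List.length_ofFn, List.getElem_ofFn]
  exact ⟨fun h i hi ↦ h i hi, fun h i hi ↦ h ⟨i, by lia⟩ hi⟩

variable {m : α} {A B : List α}

theorem isDownUpList_append_cons (hA : ∀ a ∈ A, m < a) (hB : ∀ b ∈ B, m < b) :
    IsDownUpList (A ++ m :: B) ↔
      (Odd A.length ∧ IsDownUpList A ∧ IsDownUpList B) ∨ (A = [] ∧ B = []) := by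
  constructor
  · intro h
    rcases Nat.even_or_odd A.length with he | ho
    · right
      have hA0 : A = [] := by
        by_contra! hne
        have hpos := List.length_pos_of_ne_nil hne
        have hlt : A[A.length - 1] < m := by
          have := h (A.length - 1)
          grind
        exact (hlt.trans (hA _ (List.getElem_mem _))).false
      refine ⟨hA0, ?_⟩
      by_contra! hne
      obtain ⟨b, B, rfl⟩ := List.exists_cons_of_ne_nil hne
      have hbm : b < m := by simpa [hA0] using h 0
      exact (hbm.trans (hB b List.mem_cons_self)).false
    · refine .inl ⟨ho, fun i hi ↦ ?_, fun i hi ↦ ?_⟩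
      · have := h i
        grind
      · have := h (A.length + 1 + i)
        grind
  · rintro (⟨ho, h1, h2⟩ | ⟨rfl, rfl⟩)
    · intro i hi
      have := h1 i
      have := h2 (i - (A.length + 1))
      grind
    · grind [IsDownUpList]

/-- The left-to-right minima of a list. -/
def lrMinima : List α → List α
  | [] => []
  | a :: l => a :: (lrMinima l).filter (· < a)

theorem lrMinima_subset : ∀ l : List α, lrMinima l ⊆ l
  | [] => List.nil_subset _
  | a :: l => List.cons_subset_cons a <|
      List.Subset.trans (List.filter_subset_self _) (lrMinima_subset l)

theorem lrMinima_append_cons (hA : ∀ a ∈ A, m < a) (hB : ∀ b ∈ B, m < b) :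
    lrMinima (A ++ m :: B) = lrMinima A ++ [m] := by
  induction A with
  | nil =>
    have hB' : ∀ b ∈ lrMinima B, m ≤ b := fun b hb ↦ (hB b (lrMinima_subset B hb)).le
    simpa [lrMinima]
  | cons a A ih => simp_all [lrMinima]

theorem countP_lrMinima_ofFn {n : ℕ} (f : Fin n → α) (p : α → Prop) [DecidablePred p] :
    (lrMinima (List.ofFn f)).countP (fun a ↦ p a) =
      Finset.card {i | p (f i) ∧ ∀ j < i, f i < f j} := by
  induction n generalizing p with
  | zero => simp [lrMinima]
  | succ n ih =>
    have ih' := ih (fun i ↦ f i.succ) (fun a ↦ p a ∧ a < f 0)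
    simp only [Bool.decide_and] at ih'
    rw [Fin.card_filter_univ_succ', List.ofFn_succ, lrMinima, List.countP_cons, List.countP_filter,
      ih']
    simp [Fin.forall_fin_succ, add_comm, and_assoc]

theorem length_lrMinima_ofFn {n : ℕ} (f : Fin n → α) :
    (lrMinima (List.ofFn f)).length = {i | ∀ j < i, f i < f j}.ncard := by
  have h := countP_lrMinima_ofFn f (fun _ ↦ True)
  simp only [decide_true, List.countP_true, true_and] at h
  rw [h, ← Set.ncard_coe_finset, Finset.coe_filter_univ]

end DownUpLists

section Weights

variable {α R : Type*} [LinearOrder α] [CommSemiring R]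

open scoped Classical in
/-- The weight `x ^ (number of left-to-right minima)` on down-up lists of odd length. -/
noncomputable def oddWeight (x : R) (l : List α) : R :=
  if Odd l.length ∧ IsDownUpList l then x ^ (lrMinima l).length else 0

open scoped Classical in
/-- The indicator of the down-up lists of even length. -/
noncomputable def evenWeight (R : Type*) [CommSemiring R] (l : List α) : R :=
  if Even l.length ∧ IsDownUpList l then 1 else 0

open scoped Classical in
/-- The weight on down-up lists of even length whose sum over permutations is
`C̄^{(1,0,∅,0)}_{2n}(x)`: the exponent `mmp^{(1,0,∅,0)} + χ` counts the left-to-right minima other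
than a final one. -/
noncomputable def closedWeight (x : R) (l : List α) : R :=
  if Even l.length ∧ IsDownUpList l then x ^ (lrMinima l.dropLast).length else 0

/-- The factor contributed to `closedWeight` by the minimal entry and the entries after it. -/
noncomputable def tailWeight (x : R) (l : List α) : R :=
  if l = [] then 1 else x * evenWeight R l

theorem oddWeight_nil (x : R) : oddWeight x ([] : List α) = 0 := by
  simp [oddWeight]

theorem evenWeight_nil : evenWeight R ([] : List α) = 1 := by
  simp [evenWeight, isDownUpList_nil]

theorem closedWeight_nil (x : R) : closedWeight x ([] : List α) = 1 := by
  simp [closedWeight, isDownUpList_nil, lrMinima]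

theorem closedWeight_of_odd_length (x : R) {l : List α} (hl : Odd l.length) :
    closedWeight x l = 0 := by
  rw [closedWeight, if_neg fun h ↦ Nat.not_even_iff_odd.2 hl h.1]

variable {m : α} {A B : List α}

theorem oddWeight_append_cons (x : R) (hA : ∀ a ∈ A, m < a) (hB : ∀ b ∈ B, m < b) :
    oddWeight x (A ++ m :: B) =
      (if A = [] ∧ B = [] then x else 0) + oddWeight x A * (x * oddWeight 1 B) := by
  by_cases hnil : A = [] ∧ B = []
  · obtain ⟨rfl, rfl⟩ := hnil
    simp [oddWeight, lrMinima, IsDownUpList]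
  have hlr : (lrMinima (A ++ m :: B)).length = (lrMinima A).length + 1 := by
    rw [lrMinima_append_cons hA hB, List.length_append, List.length_singleton]
  classical
  have hiff : Odd (A ++ m :: B).length ∧ IsDownUpList (A ++ m :: B) ↔
      (Odd A.length ∧ IsDownUpList A) ∧ Odd B.length ∧ IsDownUpList B := by
    grind [isDownUpList_append_cons hA hB]
  simp only [oddWeight, hiff, hlr, if_neg hnil, zero_add, one_pow, mul_boole,
    ite_zero_mul_ite_zero, pow_succ]

theorem evenWeight_append_cons (hA : ∀ a ∈ A, m < a) (hB : ∀ b ∈ B, m < b) :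
    evenWeight R (A ++ m :: B) = oddWeight 1 A * evenWeight R B := by
  classical
  have hiff : Even (A ++ m :: B).length ∧ IsDownUpList (A ++ m :: B) ↔
      (Odd A.length ∧ IsDownUpList A) ∧ Even B.length ∧ IsDownUpList B := by
    grind [isDownUpList_append_cons hA hB]
  simp only [evenWeight, oddWeight, hiff, ite_zero_mul_ite_zero, one_pow, mul_one]

theorem closedWeight_append_cons (x : R) (hA : ∀ a ∈ A, m < a) (hB : ∀ b ∈ B, m < b) :
    closedWeight x (A ++ m :: B) = oddWeight x A * tailWeight x B := by
  classical
  have hiff : Even (A ++ m :: B).length ∧ IsDownUpList (A ++ m :: B) ↔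
      (Odd A.length ∧ IsDownUpList A) ∧ Even B.length ∧ IsDownUpList B := by
    grind [isDownUpList_append_cons hA hB]
  simp only [closedWeight, oddWeight, tailWeight, evenWeight, hiff]
  rcases List.eq_nil_or_concat' B with rfl | ⟨B, b, rfl⟩
  · simp [isDownUpList_nil]
  · have hB' : ∀ b ∈ B, m < b := fun c hc ↦ hB c (List.mem_append_left _ hc)
    have hlr : (lrMinima (A ++ m :: (B ++ [b])).dropLast).length = (lrMinima A).length + 1 := by
      rw [← List.cons_append, ← List.append_assoc, List.dropLast_concat,
        lrMinima_append_cons hA hB', List.length_append, List.length_singleton]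
    have hne : B ++ [b] ≠ [] := List.append_ne_nil_of_right_ne_nil B (List.cons_ne_nil b [])
    simp only [hlr, if_neg hne, mul_boole, ite_zero_mul_ite_zero, pow_succ]

end Weights

section Permutations

variable {n : ℕ}

/-- The positions of the left-to-right minima of `σ`, the last position excluded. -/
def lrMinPositions (σ : Equiv.Perm (Fin (n + 1))) : Set (Fin n) :=
  {i | ∀ j < i, σ i.castSucc < σ j.castSucc}

theorem length_lrMinima_dropLast_ofFn (σ : Equiv.Perm (Fin (n + 1))) :
    (lrMinima (List.ofFn σ).dropLast).length = (lrMinPositions σ).ncard := by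
  rw [List.ofFn_succ', List.concat_eq_append, List.dropLast_concat, length_lrMinima_ofFn,
    lrMinPositions]

theorem mem_lrMinPositions_iff {σ : Equiv.Perm (Fin (n + 1))} {i : Fin n} :
    i ∈ lrMinPositions σ ↔ ¬ ∃ j < i.castSucc, σ j < σ i.castSucc := by
  push Not
  constructor
  · intro hi j hj
    have hj' : j ≠ Fin.last n := (hj.trans (Fin.castSucc_lt_last i)).ne
    rw [← Fin.castSucc_castPred j hj'] at hj ⊢
    exact (hi _ hj).le
  · intro hi j hj
    exact (hi _ hj).lt_of_ne fun heq ↦ hj.ne' (Fin.castSucc_injective n (σ.injective heq))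

theorem not_matches1_last (σ : Equiv.Perm (Fin (n + 1))) : ¬ Matches1 σ (Fin.last n) :=
  fun ⟨⟨j, hj, _⟩, _⟩ ↦ (Fin.le_last j).not_gt hj

theorem DownUp.castSucc_lt_succ_of_odd {σ : Equiv.Perm (Fin (n + 1))} (hσ : DownUp σ) {i : Fin n}
    (hodd : Odd i.val) : σ i.castSucc < σ i.succ :=
  (if_neg (Nat.not_even_iff_odd.2 hodd)).mp (hσ i.castSucc (Nat.succ_lt_succ i.isLt))

theorem DownUp.eq_zero_of_even_of_mem_lrMinPositions {σ : Equiv.Perm (Fin (n + 2))}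
    (hσ : DownUp σ) {i : Fin (n + 1)} (hi : i ∈ lrMinPositions σ) (heven : Even i.val) : i = 0 := by
  by_contra h0
  obtain ⟨j, rfl⟩ := Fin.exists_succ_eq.2 h0
  have hodd : Odd j.castSucc.val := by simpa [Nat.even_add_one] using heven
  exact (hσ.castSucc_lt_succ_of_odd hodd).not_gt (hi j.castSucc Fin.castSucc_lt_succ)

theorem exists_pos_zero_lt_iff {σ : Equiv.Perm (Fin (n + 1))} :
    (∃ j, 0 < j ∧ σ 0 < σ j) ↔ σ 0 ≠ Fin.last n := by
  constructor
  · rintro ⟨j, -, hj⟩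
    exact Fin.ne_last_of_lt hj
  · intro hne
    refine ⟨σ.symm (Fin.last n), Fin.pos_of_ne_zero fun h ↦ hne ?_, ?_⟩
    · rw [← h, σ.apply_symm_apply]
    · rw [σ.apply_symm_apply]
      exact Fin.lt_last_iff_ne_last.2 hne

theorem DownUp.matches1_castSucc_iff {σ : Equiv.Perm (Fin (n + 2))} (hσ : DownUp σ)
    (i : Fin (n + 1)) :
    Matches1 σ i.castSucc ↔ i ∈ lrMinPositions σ ∧ ¬ (i = 0 ∧ σ 0 = Fin.last (n + 1)) := by
  rw [Matches1, ← mem_lrMinPositions_iff, and_comm, and_congr_right_iff]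
  intro hi
  rcases Nat.even_or_odd i.val with heven | hodd
  · obtain rfl := hσ.eq_zero_of_even_of_mem_lrMinPositions hi heven
    rw [Fin.castSucc_zero, exists_pos_zero_lt_iff, eq_self, true_and]
  · have h0 : i ≠ 0 := by
      rintro rfl
      simp at hodd
    exact iff_of_true ⟨i.succ, Fin.castSucc_lt_succ, hσ.castSucc_lt_succ_of_odd hodd⟩
      fun h ↦ h0 h.1

theorem DownUp.mmp1_add_eq {σ : Equiv.Perm (Fin (n + 2))} (hσ : DownUp σ) :
    mmp1 σ + (if (σ 0).val = n + 1 then 1 else 0) =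
      (lrMinima (List.ofFn σ).dropLast).length := by
  have hset : {i | Matches1 σ i} =
      Fin.castSucc '' (lrMinPositions σ \ {i | i = 0 ∧ σ 0 = Fin.last (n + 1)}) := by
    ext i
    induction i using Fin.lastCases with
    | last => simp [not_matches1_last]
    | cast i => simp [hσ.matches1_castSucc_iff]
  rw [mmp1, hset, Set.ncard_image_of_injective _ (Fin.castSucc_injective _),
    length_lrMinima_dropLast_ofFn]
  have h0 : 0 ∈ lrMinPositions σ := fun j hj ↦ absurd hj (Fin.not_lt_zero j)
  by_cases hmax : σ 0 = Fin.last (n + 1)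
  · simp [hmax, Set.ncard_sdiff_singleton_add_one h0]
  · have hval : (σ 0).val ≠ n + 1 := fun h ↦ hmax (Fin.ext h)
    simp [hmax, hval]

theorem ofReal_Cbar (n : ℕ) (x : ℝ) :
    (Cbar n x : ℂ) =
      ∑ l ∈ arrangements (Finset.univ : Finset (Fin (2 * n + 2))), closedWeight (x : ℂ) l := by
  classical
  rw [← sum_ofFn_perm, Cbar, Complex.ofReal_sum]
  refine Finset.sum_congr rfl fun σ _ ↦ ?_
  have hiff : Even (List.ofFn σ).length ∧ IsDownUpList (List.ofFn σ) ↔ DownUp σ := by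
    rw [isDownUpList_ofFn_iff, List.length_ofFn]
    exact and_iff_right ⟨n + 1, by ring⟩
  simp only [closedWeight, hiff]
  by_cases hσ : DownUp σ
  · rw [if_pos hσ, if_pos hσ, ← hσ.mmp1_add_eq, Complex.ofReal_pow]
    rfl
  · rw [if_neg hσ, if_neg hσ, Complex.ofReal_zero]

end Permutations

section ExponentialGeneratingFunctions

open Finset Topology
open scoped ContDiff

variable {α 𝕜 : Type*} [NontriviallyNormedField 𝕜]

/-- On the arrangements of `s`, the weight `f` has total the `#s`-th Taylor coefficient at `0`,
normalised as a derivative, of `F`; for all `s` at once this says that `F` is the exponential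
generating function of `f`. -/
def IsEgfAt (f : List α → 𝕜) (F : 𝕜 → 𝕜) (s : Finset α) : Prop :=
  ∑ l ∈ arrangements s, f l = iteratedDeriv #s F 0

variable {f g h : List α → 𝕜} {F G H : 𝕜 → 𝕜} {s : Finset α}

theorem IsEgfAt.const_mul (hf : IsEgfAt f F s) (a : 𝕜) :
    IsEgfAt (fun l ↦ a * f l) (fun z ↦ a * F z) s := by
  rw [IsEgfAt, iteratedDeriv_const_mul_field, ← mul_sum, hf]

variable [LinearOrder α]

theorem IsEgfAt.const_add (hf : IsEgfAt f F s) (hF : ContDiffAt 𝕜 ∞ F 0) (a : 𝕜) :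
    IsEgfAt (fun l ↦ (if l = [] then a else 0) + f l) (fun z ↦ a + F z) s := by
  rw [IsEgfAt, iteratedDeriv_fun_add contDiffAt_const (contDiffAt_infty.1 hF _),
    iteratedDeriv_const, sum_add_distrib, sum_arrangements_ite_eq_nil, hf]
  simp only [card_eq_zero]

theorem sum_powerset_mul_of_isEgfAt {t : Finset α}
    (hF : ContDiffAt 𝕜 ∞ F 0) (hG : ContDiffAt 𝕜 ∞ G 0)
    (hf : ∀ u ⊆ t, IsEgfAt f F u) (hg : ∀ u ⊆ t, IsEgfAt g G u) :
    ∑ u ∈ t.powerset, (∑ A ∈ arrangements u, f A) * ∑ B ∈ arrangements (t \ u), g B =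
      iteratedDeriv #t (fun z ↦ F z * G z) 0 := by
  calc _ = ∑ u ∈ t.powerset, iteratedDeriv #u F 0 * iteratedDeriv (#t - #u) G 0 := by
        refine sum_congr rfl fun u hu ↦ ?_
        have hut := mem_powerset.1 hu
        rw [hf u hut, hg _ sdiff_subset, card_sdiff_of_subset hut]
    _ = iteratedDeriv #t (fun z ↦ F z * G z) 0 := by
        rw [sum_powerset_apply_card (fun k ↦ iteratedDeriv k F 0 * iteratedDeriv (#t - k) G 0),
          iteratedDeriv_fun_mul (contDiffAt_infty.1 hF _) (contDiffAt_infty.1 hG _)]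
        simp only [nsmul_eq_mul, mul_assoc]

theorem sum_arrangements_insert_of_split {t : Finset α} {m : α} {c : 𝕜} (hmt : ∀ b ∈ t, m < b)
    (hsplit : ∀ A B : List α, (∀ a ∈ A, m < a) → (∀ b ∈ B, m < b) →
      h (A ++ m :: B) = (if A = [] ∧ B = [] then c else 0) + f A * g B) :
    ∑ l ∈ arrangements (insert m t), h l = (if t = ∅ then c else 0) +
      ∑ u ∈ t.powerset, (∑ A ∈ arrangements u, f A) * ∑ B ∈ arrangements (t \ u), g B := by
  have hm : m ∉ t := fun hmem ↦ (hmt m hmem).false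
  have hconst : ∑ u ∈ t.powerset, ∑ A ∈ arrangements u, ∑ B ∈ arrangements (t \ u),
      (if A = [] ∧ B = [] then c else 0) = if t = ∅ then c else 0 := by
    simp only [ite_and, sum_ite_irrel, sum_const_zero, sum_arrangements_ite_eq_nil]
    simp
  rw [sum_arrangements_insert hm, ← hconst, ← sum_add_distrib]
  refine sum_congr rfl fun u hu ↦ ?_
  rw [sum_mul_sum, ← sum_add_distrib]
  refine sum_congr rfl fun A hA ↦ ?_
  rw [← sum_add_distrib]
  refine sum_congr rfl fun B hB ↦ hsplit A B (fun a ha ↦ hmt a ?_) fun b hb ↦ hmt b ?_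
  · exact mem_powerset.1 hu ((mem_of_mem_arrangements hA).1 ha)
  · exact sdiff_subset ((mem_of_mem_arrangements hB).1 hb)

/-- Splitting a list at its minimum turns into a differential equation for the generating
function; either factor may be `h` itself, which is why `hf` and `hg` may use the claim. -/
theorem isEgfAt_of_hasDerivAt {c : 𝕜} (hF : ContDiffAt 𝕜 ∞ F 0) (hG : ContDiffAt 𝕜 ∞ G 0)
    (hderiv : ∀ᶠ z in 𝓝 0, HasDerivAt H (c + F z * G z) z) (hnil : h [] = H 0)
    (hsplit : ∀ (m : α) (A B : List α), (∀ a ∈ A, m < a) → (∀ b ∈ B, m < b) →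
      h (A ++ m :: B) = (if A = [] ∧ B = [] then c else 0) + f A * g B)
    (hf : ∀ u, IsEgfAt h H u → IsEgfAt f F u) (hg : ∀ u, IsEgfAt h H u → IsEgfAt g G u)
    (s : Finset α) : IsEgfAt h H s := by
  induction s using Finset.strongInductionOn with
  | _ s ih =>
    rcases s.eq_empty_or_nonempty with rfl | hs
    · simpa [IsEgfAt, arrangements_empty] using hnil
    set m := s.min' hs
    set t := s.erase m
    have hmt : ∀ b ∈ t, m < b := fun b hb ↦ s.min'_lt_of_mem_erase_min' hs hb
    have hst : insert m t = s := insert_erase (s.min'_mem hs)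
    have hsub : ∀ u ⊆ t, u ⊂ s := fun u hu ↦ hu.trans_ssubset (erase_ssubset (s.min'_mem hs))
    have hcard : #s = #t + 1 := by rw [← hst, card_insert_of_notMem (notMem_erase m s)]
    have hderiv' : deriv H =ᶠ[𝓝 0] fun z ↦ c + F z * G z := hderiv.mono fun _ hz ↦ hz.deriv
    rw [IsEgfAt, hcard, iteratedDeriv_succ', hderiv'.iteratedDeriv_eq,
      iteratedDeriv_fun_add contDiffAt_const (contDiffAt_infty.1 (hF.mul hG) _),
      iteratedDeriv_const, ← sum_powerset_mul_of_isEgfAt hF hG (fun u hu ↦ hf u (ih u (hsub u hu)))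
        fun u hu ↦ hg u (ih u (hsub u hu)), ← hst,
      sum_arrangements_insert_of_split hmt (hsplit m)]
    simp only [card_eq_zero]

end ExponentialGeneratingFunctions

section HolomorphicFunctions

open Complex Metric Topology

theorem hasDerivAt_wedgeIntegral_of_mem_ball {f : ℂ → ℂ} {c z : ℂ} {r : ℝ}
    (hf : DifferentiableOn ℂ f (ball c r)) (hz : z ∈ ball c r) :
    HasDerivAt (fun w ↦ wedgeIntegral c w f) (f z) z :=
  hf.isConservativeOn.hasDerivAt_wedgeIntegral hf.continuousOn hz

theorem wedgeIntegral_self (f : ℂ → ℂ) (c : ℂ) : wedgeIntegral c c f = 0 := by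
  simp [wedgeIntegral]

theorem wedgeIntegral_ofReal (f : ℂ → ℂ) (a b : ℝ) :
    wedgeIntegral a b f = ∫ y in a..b, f y := by
  simp [wedgeIntegral]

theorem cos_mem_slitPlane {z : ℂ} (hz : |z.re| < Real.pi / 2) : cos z ∈ slitPlane := by
  have hre : (cos z).re = Real.cos z.re * Real.cosh z.im := by
    rw [cos_eq, ← ofReal_cos, ← ofReal_cosh, ← ofReal_sin, ← ofReal_sinh]
    simp only [← ofReal_mul, sub_re, re_ofReal_mul, ofReal_re, I_re, mul_zero, sub_zero]
  have hcos : 0 < Real.cos z.re :=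
    Real.cos_pos_of_mem_Ioo ⟨by linarith [neg_lt_of_abs_lt hz], (abs_lt.1 hz).2⟩
  exact .inl (hre ▸ mul_pos hcos (Real.cosh_pos _))

theorem hasDerivAt_tan_eq_one_add_tan_mul_tan {z : ℂ} (hz : cos z ≠ 0) :
    HasDerivAt tan (1 + tan z * tan z) z := by
  convert! hasDerivAt_tan hz using 1
  rw [tan_eq_sin_div_cos]
  field_simp
  exact cos_sq_add_sin_sq z

theorem hasDerivAt_inv_cos {z : ℂ} (hz : cos z ≠ 0) :
    HasDerivAt (fun w ↦ (cos w)⁻¹) (tan z * (cos z)⁻¹) z := by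
  convert! (hasDerivAt_cos z).inv hz using 1
  rw [tan_eq_sin_div_cos]
  field_simp

theorem hasDerivAt_cos_cpow {z : ℂ} (hz : cos z ∈ slitPlane) (c : ℂ) :
    HasDerivAt (fun w ↦ cos w ^ c) (-c * cos z ^ c * tan z) z := by
  have h0 := slitPlane_ne_zero hz
  convert! (hasDerivAt_cos z).cpow_const hz using 1
  rw [cpow_sub _ _ h0, cpow_one, tan_eq_sin_div_cos]
  ring

/-- The primitive of `cos ^ x` that vanishes at `0`. -/
noncomputable def cosPowPrimitive (x z : ℂ) : ℂ :=
  wedgeIntegral 0 z fun w ↦ cos w ^ x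

/-- The exponential generating function of `oddWeight x`. -/
noncomputable def oddEgf (x z : ℂ) : ℂ :=
  x * cos z ^ (-x) * cosPowPrimitive x z

/-- The exponential generating function of `tailWeight x`. -/
noncomputable def tailEgf (x z : ℂ) : ℂ :=
  1 - x + x * (cos z)⁻¹

/-- The exponential generating function of `closedWeight x`. -/
noncomputable def closedEgf (x z : ℂ) : ℂ :=
  1 + wedgeIntegral 0 z fun w ↦ oddEgf x w * tailEgf x w

variable {x z : ℂ}

theorem cos_mem_slitPlane_of_mem_ball (hz : z ∈ ball 0 (Real.pi / 2)) : cos z ∈ slitPlane :=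
  cos_mem_slitPlane ((abs_re_le_norm z).trans_lt (mem_ball_zero_iff.1 hz))

theorem cos_ne_zero_of_mem_ball (hz : z ∈ ball 0 (Real.pi / 2)) : cos z ≠ 0 :=
  slitPlane_ne_zero (cos_mem_slitPlane_of_mem_ball hz)

theorem hasDerivAt_cosPowPrimitive (x : ℂ) (hz : z ∈ ball 0 (Real.pi / 2)) :
    HasDerivAt (cosPowPrimitive x) (cos z ^ x) z :=
  hasDerivAt_wedgeIntegral_of_mem_ball (fun _ hw ↦ (hasDerivAt_cos_cpow
    (cos_mem_slitPlane_of_mem_ball hw) x).differentiableAt.differentiableWithinAt) hz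

theorem hasDerivAt_oddEgf (x : ℂ) (hz : z ∈ ball 0 (Real.pi / 2)) :
    HasDerivAt (oddEgf x) (x + oddEgf x z * (x * tan z)) z := by
  have hcos := cos_mem_slitPlane_of_mem_ball hz
  have hcancel : cos z ^ (-x) * cos z ^ x = 1 := by
    rw [← cpow_add _ _ (slitPlane_ne_zero hcos), neg_add_cancel, cpow_zero]
  convert! ((hasDerivAt_cos_cpow hcos (-x)).const_mul x).mul (hasDerivAt_cosPowPrimitive x hz)
    using 1
  rw [oddEgf]
  linear_combination -x * hcancel

theorem hasDerivAt_tailEgf (x : ℂ) (hz : cos z ≠ 0) :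
    HasDerivAt (tailEgf x) (x * (tan z * (cos z)⁻¹)) z :=
  ((hasDerivAt_inv_cos hz).const_mul x).const_add (1 - x)

theorem hasDerivAt_closedEgf (x : ℂ) (hz : z ∈ ball 0 (Real.pi / 2)) :
    HasDerivAt (closedEgf x) (oddEgf x z * tailEgf x z) z := by
  refine (hasDerivAt_wedgeIntegral_of_mem_ball (fun w hw ↦ ?_) hz).const_add 1
  exact ((hasDerivAt_oddEgf x hw).mul (hasDerivAt_tailEgf x
    (cos_ne_zero_of_mem_ball hw))).differentiableAt.differentiableWithinAt

end HolomorphicFunctions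

section WeightSeries

open Complex Finset Metric Topology
open scoped ContDiff

theorem contDiffAt_of_eventually_hasDerivAt {f f' : ℂ → ℂ} {c : ℂ}
    (hf : ∀ᶠ z in 𝓝 c, HasDerivAt f (f' z) z) : ContDiffAt ℂ ∞ f c :=
  (analyticAt_iff_eventually_differentiableAt.2
    (hf.mono fun _ hz ↦ hz.differentiableAt)).contDiffAt

theorem eventually_nhds_zero_of_ball {p : ℂ → Prop} (hp : ∀ z ∈ ball 0 (Real.pi / 2), p z) :
    ∀ᶠ z in 𝓝 0, p z :=
  Filter.eventually_of_mem (ball_mem_nhds 0 Real.pi_div_two_pos) hp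

theorem contDiffAt_tan_zero : ContDiffAt ℂ ∞ tan 0 :=
  contDiffAt_of_eventually_hasDerivAt <| eventually_nhds_zero_of_ball fun _ hz ↦
    hasDerivAt_tan (cos_ne_zero_of_mem_ball hz)

theorem contDiffAt_inv_cos_zero : ContDiffAt ℂ ∞ (fun z ↦ (cos z)⁻¹) 0 :=
  contDiffAt_of_eventually_hasDerivAt <| eventually_nhds_zero_of_ball fun _ hz ↦
    hasDerivAt_inv_cos (cos_ne_zero_of_mem_ball hz)

theorem contDiffAt_oddEgf_zero (x : ℂ) : ContDiffAt ℂ ∞ (oddEgf x) 0 :=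
  contDiffAt_of_eventually_hasDerivAt <| eventually_nhds_zero_of_ball fun _ hz ↦
    hasDerivAt_oddEgf x hz

theorem contDiffAt_tailEgf_zero (x : ℂ) : ContDiffAt ℂ ∞ (tailEgf x) 0 :=
  contDiffAt_const.add (contDiffAt_const.mul contDiffAt_inv_cos_zero)

variable {α : Type*} [LinearOrder α] (x : ℂ) (s : Finset α)

theorem isEgfAt_tan : IsEgfAt (oddWeight (1 : ℂ)) tan s := by
  refine isEgfAt_of_hasDerivAt contDiffAt_tan_zero contDiffAt_tan_zero
    (eventually_nhds_zero_of_ball fun z hz ↦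
      hasDerivAt_tan_eq_one_add_tan_mul_tan (cos_ne_zero_of_mem_ball hz))
    (by rw [oddWeight_nil, tan_zero]) (fun m A B hA hB ↦ ?_) (fun _ ↦ id) (fun _ ↦ id) s
  rw [oddWeight_append_cons 1 hA hB, one_mul]

theorem isEgfAt_inv_cos : IsEgfAt (evenWeight ℂ) (fun z ↦ (cos z)⁻¹) s := by
  refine isEgfAt_of_hasDerivAt (c := 0) contDiffAt_tan_zero contDiffAt_inv_cos_zero
    (eventually_nhds_zero_of_ball fun z hz ↦ ?_) (by rw [evenWeight_nil, cos_zero, inv_one])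
    (fun m A B hA hB ↦ ?_) (fun u _ ↦ isEgfAt_tan u) (fun _ ↦ id) s
  · rw [zero_add]
    exact hasDerivAt_inv_cos (cos_ne_zero_of_mem_ball hz)
  · rw [evenWeight_append_cons hA hB, ite_self, zero_add]

theorem isEgfAt_oddEgf : IsEgfAt (oddWeight x) (oddEgf x) s := by
  refine isEgfAt_of_hasDerivAt (contDiffAt_oddEgf_zero x) (contDiffAt_const.mul contDiffAt_tan_zero)
    (eventually_nhds_zero_of_ball fun z hz ↦ hasDerivAt_oddEgf x hz) ?_
    (fun m A B hA hB ↦ oddWeight_append_cons x hA hB) (fun _ ↦ id)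
    (fun u _ ↦ (isEgfAt_tan u).const_mul x) s
  rw [oddWeight_nil, oddEgf, cosPowPrimitive, wedgeIntegral_self, mul_zero]

theorem isEgfAt_tailEgf : IsEgfAt (tailWeight x) (tailEgf x) s := by
  have htail : tailWeight x =
      fun l : List α ↦ (if l = [] then 1 - x else 0) + x * evenWeight ℂ l := by
    funext l
    by_cases hl : l = []
    · simp [tailWeight, hl, evenWeight_nil]
    · simp [tailWeight, hl]
  rw [htail]
  exact ((isEgfAt_inv_cos s).const_mul x).const_add
    (contDiffAt_const.mul contDiffAt_inv_cos_zero) (1 - x)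

theorem isEgfAt_closedEgf : IsEgfAt (closedWeight x) (closedEgf x) s := by
  refine isEgfAt_of_hasDerivAt (c := 0) (contDiffAt_oddEgf_zero x) (contDiffAt_tailEgf_zero x)
    (eventually_nhds_zero_of_ball fun z hz ↦ ?_) ?_ (fun m A B hA hB ↦ ?_)
    (fun u _ ↦ isEgfAt_oddEgf x u) (fun u _ ↦ isEgfAt_tailEgf x u) s
  · rw [zero_add]
    exact hasDerivAt_closedEgf x hz
  · rw [closedWeight_nil, closedEgf, wedgeIntegral_self, add_zero]
  · rw [closedWeight_append_cons x hA hB, ite_self, zero_add]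

theorem hasSum_closedWeight {z : ℂ} (hz : z ∈ ball 0 (Real.pi / 2)) :
    HasSum (fun n ↦ (∑ l ∈ arrangements (univ : Finset (Fin n)), closedWeight x l) *
      z ^ n / n.factorial) (closedEgf x z) := by
  have hdiff : DifferentiableOn ℂ (closedEgf x) (ball 0 (Real.pi / 2)) := fun w hw ↦
    (hasDerivAt_closedEgf x hw).differentiableAt.differentiableWithinAt
  convert! hasSum_taylorSeries_on_ball hdiff hz using 2 with n
  rw [isEgfAt_closedEgf x univ, card_fin, sub_zero, smul_eq_mul, smul_eq_mul]
  ring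

theorem sum_closedWeight_of_odd {n : ℕ} (hn : Odd n) :
    ∑ l ∈ arrangements (univ : Finset (Fin n)), closedWeight x l = 0 :=
  sum_eq_zero fun l hl ↦ closedWeight_of_odd_length x <| by
    rwa [length_of_mem_arrangements hl, card_fin]

theorem hasSum_even_closedWeight {z : ℂ} (hz : z ∈ ball 0 (Real.pi / 2)) :
    HasSum (fun n ↦ (∑ l ∈ arrangements (univ : Finset (Fin (2 * n))), closedWeight x l) *
      z ^ (2 * n) / (2 * n).factorial) (closedEgf x z) := by
  refine ((mul_right_injective₀ two_ne_zero).hasSum_iff fun n hn ↦ ?_).2 (hasSum_closedWeight x hz)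
  have hodd : Odd n := Nat.not_even_iff_odd.1 fun ⟨k, hk⟩ ↦ hn ⟨k, (two_mul k).trans hk.symm⟩
  rw [sum_closedWeight_of_odd x hodd, zero_mul, zero_div]

end WeightSeries

section RealValues

variable {x t : ℝ}

theorem cos_pos_of_abs_lt (ht : |t| < Real.pi / 2) : 0 < Real.cos t :=
  Real.cos_pos_of_mem_Ioo ⟨neg_lt_of_abs_lt ht, lt_of_abs_lt ht⟩

theorem wedgeIntegral_ofReal_eq {f : ℂ → ℂ} {g : ℝ → ℝ} {r : ℝ}
    (hfg : ∀ y : ℝ, |y| < r → f y = g y) (ht : |t| < r) :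
    Complex.wedgeIntegral 0 t f = (∫ y in 0..t, g y : ℝ) := by
  rw [← Complex.ofReal_zero, wedgeIntegral_ofReal, ← intervalIntegral.integral_ofReal]
  refine intervalIntegral.integral_congr fun y hy ↦ hfg y (lt_of_le_of_lt ?_ ht)
  simpa using Set.abs_sub_left_of_mem_uIcc hy

theorem cosPowPrimitive_ofReal (x : ℝ) (ht : |t| < Real.pi / 2) :
    cosPowPrimitive x t = (∫ y in 0..t, Real.cos y ^ x : ℝ) := by
  refine wedgeIntegral_ofReal_eq (fun y hy ↦ ?_) ht
  rw [Complex.ofReal_cpow (cos_pos_of_abs_lt hy).le, Complex.ofReal_cos]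

theorem oddEgf_ofReal (x : ℝ) (ht : |t| < Real.pi / 2) :
    oddEgf x t = (x * (Real.cos t)⁻¹ ^ x * ∫ y in 0..t, Real.cos y ^ x : ℝ) := by
  have hcos := (cos_pos_of_abs_lt ht).le
  rw [oddEgf, cosPowPrimitive_ofReal x ht, Real.inv_rpow hcos, ← Real.rpow_neg hcos]
  push_cast [Complex.ofReal_cpow hcos]
  rfl

theorem closedEgf_ofReal (x : ℝ) (ht : |t| < Real.pi / 2) :
    closedEgf x t = (1 + ∫ z in 0..t, x * (Real.cos z)⁻¹ ^ x * (1 - x + x * (Real.cos z)⁻¹) *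
      ∫ y in 0..z, Real.cos y ^ x : ℝ) := by
  rw [closedEgf, Complex.ofReal_add, Complex.ofReal_one]
  congr 1
  refine wedgeIntegral_ofReal_eq (fun z hz ↦ ?_) ht
  rw [oddEgf_ofReal x hz, tailEgf]
  push_cast
  ring

end RealValues

/-- `1 + Σ_{n≥1} C̄^{(1,0,∅,0)}_{2n}(x) t^{2n}/(2n)!` converges to
`1 + ∫_0^t x (sec z)^x (1 − x + x sec z) (∫_0^z (cos y)^x dy) dz`. -/
theorem stmt6 (x t : ℝ) (ht : |t| < Real.pi / 2) :
    HasSum (fun n : ℕ => if n = 0 then (1 : ℝ)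
        else Cbar (n-1) x * t ^ (2*n) / (Nat.factorial (2*n) : ℝ))
      (1 + ∫ z in (0:ℝ)..t, x * ((Real.cos z)⁻¹) ^ x * (1 - x + x * (Real.cos z)⁻¹) *
        ∫ y in (0:ℝ)..z, (Real.cos y) ^ x) := by
  rw [← Complex.hasSum_ofReal, ← closedEgf_ofReal x ht]
  convert! hasSum_even_closedWeight (x : ℂ) (z := t) (by simpa using ht) using 2 with n
  rcases n with _ | n
  · simp [arrangements_empty, closedWeight_nil]
  · rw [if_neg n.succ_ne_zero, Nat.add_sub_cancel]
    push_cast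
    rw [ofReal_Cbar]
    rfl
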